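/- Let β ≥ 1 and 0 < α < 1/3. Then the system dθ/dt = F₁(θ,W), dW/dt = F₂(θ,W) on Ω_β has exactly two equilibrium points (θ_*, 0) and (θ_**, 0) with 0 < θ_* < θ_β and θ_β < θ_** < π/2, and for arbitrary initial data (θ₀, W₀) ∈ Ω_β the following are equivalent: (i) the solution with initial data (θ₀, W₀) is a leapfrogging solution, i.e., its orbit is a closed curve revolving around the point (θ_β, 0); (ii) θ₀ ∈ (θ_*, θ_**) and H(θ₀, W₀) < min{H(θ_*, 0), H(θ_**, 0)}. -/

import Mathlib

noncomputable section

open Real Set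

/-- θ_β = arctan(1/√β). -/
def thetaB (β : ℝ) : ℝ := Real.arctan (1 / Real.sqrt β)

/-- The phase space Ω_β. -/
def OmegaB (β : ℝ) : Set (ℝ × ℝ) :=
  {p | 0 < p.1 ∧ p.1 < Real.pi / 2 ∧ p ≠ (thetaB β, 0)}

/-- D(θ,W) = (d²/β)(√β sin θ − cos θ)² + W². -/
def Dfun (d β θ W : ℝ) : ℝ :=
  d ^ 2 / β * (Real.sqrt β * Real.sin θ - Real.cos θ) ^ 2 + W ^ 2

/-- F₁(θ,W) = α √β W / D(θ,W)^{3/2}. -/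
def F1 (α d β θ W : ℝ) : ℝ :=
  α * Real.sqrt β * W / Dfun d β θ W ^ ((3 : ℝ) / 2)

/-- F₂(θ,W). -/
def F2 (α d β θ W : ℝ) : ℝ :=
  (β ^ ((3 : ℝ) / 2) * Real.sin θ - Real.cos θ) / (d * Real.sin θ * Real.cos θ) -
    α * d ^ 2 * (Real.sin θ + Real.sqrt β * Real.cos θ) *
        (Real.sqrt β * Real.sin θ - Real.cos θ) /
      (Real.sqrt β * Dfun d β θ W ^ ((3 : ℝ) / 2))

/-- The Hamiltonian H(θ,W). -/
def Ham (α d β θ W : ℝ) : ℝ :=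
  1 / (2 * d) *
      Real.log (((1 - Real.sin θ) ^ (β ^ ((3 : ℝ) / 2)) * (1 - Real.cos θ)) /
        ((1 + Real.sin θ) ^ (β ^ ((3 : ℝ) / 2)) * (1 + Real.cos θ))) -
    α * Real.sqrt β / Dfun d β θ W ^ ((1 : ℝ) / 2)

/-- A time-global solution of the system (3.4), staying in the phase space Ω_β. -/
def IsSolution (α d β : ℝ) (θ W : ℝ → ℝ) : Prop :=
  (∀ t : ℝ, (θ t, W t) ∈ OmegaB β) ∧
  (∀ t : ℝ, HasDerivAt θ (F1 α d β (θ t) (W t)) t) ∧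
  (∀ t : ℝ, HasDerivAt W (F2 α d β (θ t) (W t)) t)

/-- A leapfrogging solution: a non-constant periodic solution whose (closed) orbit
revolves around the point (θ_β, 0); in particular it meets both line segments
(0, θ_β) × {0} and (θ_β, π/2) × {0}. -/
def IsLeapfrog (β : ℝ) (θ W : ℝ → ℝ) : Prop :=
  (∃ T : ℝ, 0 < T ∧ ∀ t : ℝ, θ (t + T) = θ t ∧ W (t + T) = W t) ∧
  (∃ t s : ℝ, (θ t, W t) ≠ (θ s, W s)) ∧
  (∃ t₁ : ℝ, θ t₁ ∈ Set.Ioo 0 (thetaB β) ∧ W t₁ = 0) ∧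
  (∃ t₂ : ℝ, θ t₂ ∈ Set.Ioo (thetaB β) (Real.pi / 2) ∧ W t₂ = 0)

/-!
The Hamiltonian is conserved. On the axis `W = 0` its `θ`-derivative decreases strictly from
`+∞` to `-∞` on either side of `θ_β`, so it has a single zero on each side: the equilibria are
`(θ_*, 0)` and `(θ_**, 0)`, and on its side the energy along the axis strictly increases up to the
equilibrium and strictly decreases afterwards. As the energy at fixed `θ` is smallest at `W = 0`, an
orbit whose energy is below that of both equilibria never crosses the lines `θ = θ_*` and
`θ = θ_**`.

Inside this strip such an orbit keeps meeting the axis: otherwise `θ` would eventually be monotone,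
the solution would converge, and its limit would be an equilibrium with too low an energy. The
reflection `W ↦ -W` reverses time, so an orbit meeting the axis twice is periodic. The extrema of
`θ` are attained on the axis at the same energy, hence on opposite sides of `θ_β`. Conversely, a
leapfrogging orbit meets the axis on both sides of `θ_β`, away from the equilibria, where the energy
is strictly below that of the equilibrium on the same side.
-/

open Filter Topology

section RealAnalysis

lemma rpow_three_halves {x : ℝ} (hx : 0 ≤ x) : x ^ ((3 : ℝ) / 2) = √x ^ 3 := by
  rw [sqrt_eq_rpow, ← rpow_natCast, ← rpow_mul hx]
  norm_num

lemma sin_mem_Ioo_zero_one {θ : ℝ} (hθ : θ ∈ Ioo 0 (π / 2)) : sin θ ∈ Ioo 0 1 := by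
  refine ⟨sin_pos_of_pos_of_lt_pi hθ.1 (by linarith [hθ.2, pi_pos]), ?_⟩
  rw [← sin_pi_div_two]
  exact sin_lt_sin_of_lt_of_le_pi_div_two (by linarith [hθ.1, pi_pos]) le_rfl hθ.2

lemma cos_mem_Ioo_zero_one {θ : ℝ} (hθ : θ ∈ Ioo 0 (π / 2)) : cos θ ∈ Ioo 0 1 := by
  rw [← sin_pi_div_two_sub]
  exact sin_mem_Ioo_zero_one ⟨by linarith [hθ.2], by linarith [hθ.1]⟩

lemma hasDerivAt_log_one_sub_sub_log_one_add {x : ℝ} (h₁ : 1 - x ≠ 0) (h₂ : 1 + x ≠ 0) :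
    HasDerivAt (fun y => log (1 - y) - log (1 + y)) (-2 / (1 - x ^ 2)) x := by
  refine ((((hasDerivAt_id x).const_sub 1).log h₁).sub
    (((hasDerivAt_id x).const_add 1).log h₂)).congr_deriv ?_
  rw [show 1 - x ^ 2 = (1 - x) * (1 + x) by ring]
  simp only [id_eq]
  field_simp
  ring

lemma strictMonoOn_Ioc_and_strictAntiOn_Ico_of_hasDerivAt {h h' : ℝ → ℝ} {a b c : ℝ}
    (hc : c ∈ Ioo a b) (hd : ∀ x ∈ Ioo a b, HasDerivAt h (h' x) x)
    (hanti : StrictAntiOn h' (Ioo a b)) (h0 : h' c = 0) :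
    StrictMonoOn h (Ioc a c) ∧ StrictAntiOn h (Ico c b) := by
  have hleft : Ioc a c ⊆ Ioo a b := fun x hx => ⟨hx.1, hx.2.trans_lt hc.2⟩
  have hright : Ico c b ⊆ Ioo a b := fun x hx => ⟨hc.1.trans_le hx.1, hx.2⟩
  constructor
  · refine strictMonoOn_of_deriv_pos (convex_Ioc a c)
      (fun x hx => (hd x (hleft hx)).continuousAt.continuousWithinAt) fun x hx => ?_
    rw [interior_Ioc] at hx
    rw [(hd x (hleft (Ioo_subset_Ioc_self hx))).deriv, ← h0]
    exact hanti (hleft (Ioo_subset_Ioc_self hx)) hc hx.2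
  · refine strictAntiOn_of_deriv_neg (convex_Ico c b)
      (fun x hx => (hd x (hright hx)).continuousAt.continuousWithinAt) fun x hx => ?_
    rw [interior_Ico] at hx
    rw [(hd x (hright (Ioo_subset_Ico_self hx))).deriv, ← h0]
    exact hanti hc (hright (Ioo_subset_Ico_self hx)) hx.1

lemma lt_of_strictMonoOn_of_strictAntiOn {ι κ : Type*} [LinearOrder ι] [Preorder κ] {h : ι → κ}
    {a b c x : ι} (hmono : StrictMonoOn h (Ioc a c)) (hanti : StrictAntiOn h (Ico c b))
    (hc : c ∈ Ioo a b) (hx : x ∈ Ioo a b) (hne : x ≠ c) : h x < h c := by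
  rcases lt_or_gt_of_ne hne with hlt | hgt
  · exact hmono ⟨hx.1, hlt.le⟩ ⟨hc.1, le_rfl⟩ hlt
  · exact hanti ⟨le_rfl, hc.2⟩ ⟨hgt.le, hx.2⟩ hgt

section Preconnected

variable {X κ : Type*} [TopologicalSpace X] [PreconnectedSpace X] [LinearOrder κ]
  [TopologicalSpace κ] [OrderClosedTopology κ] {f : X → κ} {a : κ} {x₀ : X}

lemma forall_lt_of_forall_ne (hf : Continuous f) (hne : ∀ x, f x ≠ a) (h₀ : f x₀ < a) (x : X) :
    f x < a := by
  by_contra! hx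
  obtain ⟨y, hy⟩ := mem_range_of_exists_le_of_exists_ge hf ⟨x₀, h₀.le⟩ ⟨x, hx⟩
  exact hne y hy

lemma forall_gt_of_forall_ne (hf : Continuous f) (hne : ∀ x, f x ≠ a) (h₀ : a < f x₀) (x : X) :
    a < f x :=
  forall_lt_of_forall_ne (κ := κᵒᵈ) hf hne h₀ x

end Preconnected

lemma exists_tendsto_atTop_of_monotoneOn_Ici {ι κ : Type*} [LinearOrder ι]
    [ConditionallyCompleteLattice κ] [TopologicalSpace κ] [SupConvergenceClass κ] {f : ι → κ}
    {a : ι} (hf : MonotoneOn f (Ici a)) (hb : BddAbove (f '' Ici a)) :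
    ∃ L, Tendsto f atTop (𝓝 L) := by
  have hmono : Monotone fun t => f (max t a) := fun _ _ hst =>
    hf (mem_Ici.2 (le_max_right _ _)) (mem_Ici.2 (le_max_right _ _)) (max_le_max_right a hst)
  refine ⟨_, (tendsto_atTop_ciSup hmono (hb.mono ?_)).congr' ?_⟩
  · rintro _ ⟨t, rfl⟩
    exact mem_image_of_mem f (le_max_right t a)
  · filter_upwards [eventually_ge_atTop a] with t ht
    rw [max_eq_left ht]

lemma exists_tendsto_atTop_of_hasDerivAt_ne_zero {f f' : ℝ → ℝ} {a : ℝ}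
    (hf : ∀ t ≥ a, HasDerivAt f (f' t) t) (hne : ∀ t > a, f' t ≠ 0)
    (habove : BddAbove (f '' Ici a)) (hbelow : BddBelow (f '' Ici a)) :
    ∃ L, Tendsto f atTop (𝓝 L) := by
  have hcont : ContinuousOn f (Ici a) := fun t ht => (hf t ht).continuousAt.continuousWithinAt
  have hderiv : ∀ t ∈ Ioi a, HasDerivAt f (f' t) t := fun t ht => hf t (Ioi_subset_Ici_self ht)
  rcases hasDerivWithinAt_forall_lt_or_forall_gt_of_forall_ne (convex_Ioi a)
    (fun t ht => (hderiv t ht).hasDerivWithinAt) hne with hneg | hpos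
  · refine exists_tendsto_atTop_of_monotoneOn_Ici (κ := ℝᵒᵈ) (AntitoneOn.dual_right ?_) hbelow
    refine antitoneOn_of_hasDerivWithinAt_nonpos (f' := f') (convex_Ici a) hcont ?_ ?_ <;>
      rw [interior_Ici]
    exacts [fun t ht => (hderiv t ht).hasDerivWithinAt, fun t ht => (hneg t ht).le]
  · refine exists_tendsto_atTop_of_monotoneOn_Ici ?_ habove
    refine monotoneOn_of_hasDerivWithinAt_nonneg (f' := f') (convex_Ici a) hcont ?_ ?_ <;>
      rw [interior_Ici]
    exacts [fun t ht => (hderiv t ht).hasDerivWithinAt, fun t ht => (hpos t ht).le]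

lemma exists_tendsto_atTop_of_tendsto_sq {f : ℝ → ℝ} {a ℓ : ℝ} (hf : Continuous f)
    (hne : ∀ t > a, f t ≠ 0) (hsq : Tendsto (fun t => f t ^ 2) atTop (𝓝 ℓ)) :
    ∃ L, Tendsto f atTop (𝓝 L) := by
  have habs : Tendsto (fun t => |f t|) atTop (𝓝 √ℓ) := by
    simpa only [sqrt_sq_eq_abs] using hsq.sqrt
  have hsign : EqOn f |f| (Ioi a) ∨ EqOn f (-|f|) (Ioi a) :=
    isPreconnected_Ioi.eq_or_eq_neg_of_sq_eq hf.continuousOn hf.abs.continuousOn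
      (fun t _ => (sq_abs (f t)).symm) fun ht => abs_ne_zero.2 (hne _ ht)
  rcases hsign with hpos | hneg
  · exact ⟨_, habs.congr' ((eventually_gt_atTop a).mono fun t ht => (hpos ht).symm)⟩
  · exact ⟨_, habs.neg.congr' ((eventually_gt_atTop a).mono fun t ht => (hneg ht).symm)⟩

end RealAnalysis

section IntegralCurves

variable {E : Type*} [NormedAddCommGroup E] [NormedSpace ℝ E] {v : E → E} {γ γ' : ℝ → E}

lemma eq_of_isIntegralCurve_of_contDiffAt {t₀ : ℝ} (hv : ∀ t, ContDiffAt ℝ 1 v (γ t))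
    (hγ : IsIntegralCurve γ fun _ => v) (hγ' : IsIntegralCurve γ' fun _ => v)
    (h₀ : γ t₀ = γ' t₀) : γ = γ' := by
  have hclosed : IsClosed {t | γ t = γ' t} := isClosed_eq hγ.continuous hγ'.continuous
  have hopen : IsOpen {t | γ t = γ' t} := by
    refine isOpen_iff_mem_nhds.2 fun t (ht : γ t = γ' t) => ?_
    obtain ⟨K, s, hs, hK⟩ := (hv t).exists_lipschitzOnWith
    exact ODE_solution_unique_of_eventually (v := fun _ => v) (s := fun _ => s)
      (Eventually.of_forall fun _ => hK)
      ((hγ.continuous.continuousAt.eventually hs).mono fun r hr => ⟨hγ r, hr⟩)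
      ((hγ'.continuous.continuousAt.eventually (ht ▸ hs)).mono fun r hr => ⟨hγ' r, hr⟩) ht
  have huniv := IsClopen.eq_univ ⟨hclosed, hopen⟩ ⟨t₀, h₀⟩
  exact funext (eq_univ_iff_forall.1 huniv)

lemma eq_apply_reflect_of_isIntegralCurve {σ : E →L[ℝ] E} {c : ℝ}
    (hv : ∀ t, ContDiffAt ℝ 1 v (γ t)) (hγ : IsIntegralCurve γ fun _ => v)
    (hσ : ∀ p, v (σ p) = -σ (v p)) (hc : σ (γ c) = γ c) (t : ℝ) :
    γ t = σ (γ (2 * c - t)) := by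
  have hγσ : IsIntegralCurve (fun t => σ (γ (2 * c - t))) fun _ => v := fun t => by
    refine (σ.hasFDerivAt.comp_hasDerivAt t
      ((hγ (2 * c - t)).comp_const_sub (2 * c) t)).congr_deriv ?_
    exact (map_neg σ _).trans (hσ _).symm
  refine congrFun (eq_of_isIntegralCurve_of_contDiffAt (t₀ := c) hv hγ hγσ ?_) t
  simp only [two_mul, add_sub_cancel_right, hc]

lemma periodic_of_isIntegralCurve_of_reversible {σ : E →L[ℝ] E} {a b : ℝ}
    (hv : ∀ t, ContDiffAt ℝ 1 v (γ t)) (hγ : IsIntegralCurve γ fun _ => v)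
    (hσ : ∀ p, v (σ p) = -σ (v p)) (ha : σ (γ a) = γ a) (hb : σ (γ b) = γ b) :
    Function.Periodic γ (2 * (b - a)) := fun t => by
  rw [eq_apply_reflect_of_isIntegralCurve hv hγ hσ hb,
    eq_apply_reflect_of_isIntegralCurve hv hγ hσ ha t]
  ring_nf

lemma apply_eq_zero_of_isIntegralCurve_of_tendsto {p : E} (hγ : IsIntegralCurve γ fun _ => v)
    (hp : Tendsto γ atTop (𝓝 p)) (hv : ContinuousAt v p) : v p = 0 := by
  -- The displacement over `[t, t + 1]` tends to `0`, but it also approaches `v p`.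
  have hdiff : Tendsto (fun t => ‖γ (t + 1) - γ t - v p‖) atTop (𝓝 ‖v p‖) := by
    simpa using (((hp.comp (tendsto_atTop_add_const_right atTop 1 tendsto_id)).sub hp).sub_const
      (v p)).norm
  refine norm_le_zero_iff.1 (le_of_forall_pos_le_add fun ε hε => ?_)
  have hnear : ∀ᶠ t in atTop, ∀ s ≥ t, ‖v (γ s) - v p‖ ≤ ε := by
    refine eventually_forall_ge_atTop.2 ?_
    filter_upwards [(hv.tendsto.comp hp).eventually (Metric.closedBall_mem_nhds _ hε)] with s hs
    simpa [dist_eq_norm] using hs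
  rw [zero_add]
  refine le_of_tendsto hdiff (hnear.mono fun t ht => ?_)
  have hmvt := (convex_Icc t (t + 1)).norm_image_sub_le_of_norm_hasDerivWithin_le
    (f := fun s => γ s - s • v p) (f' := fun s => v (γ s) - (1 : ℝ) • v p) (C := ε)
    (fun s _ => ((hγ s).sub ((hasDerivAt_id s).smul_const (v p))).hasDerivWithinAt)
    (fun s hs => by simpa using ht s hs.1) (left_mem_Icc.2 (by simp)) (right_mem_Icc.2 (by simp))
  calc ‖γ (t + 1) - γ t - v p‖
      = ‖γ (t + 1) - (t + 1) • v p - (γ t - t • v p)‖ := by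
        rw [add_smul, one_smul]
        congr 1
        abel
    _ ≤ ε := by simpa only [add_sub_cancel_left, norm_one, mul_one] using hmvt

end IntegralCurves

section Geometry

variable {d β θ W : ℝ}

lemma sqrt_one_add_mul_sin_thetaB (hβ : 0 < β) : √(1 + β) * sin (thetaB β) = 1 := by
  rw [thetaB, sin_arctan, div_pow, one_pow, sq_sqrt hβ.le, one_add_div hβ.ne', sqrt_div' _ hβ.le,
    add_comm β]
  field_simp

lemma sqrt_one_add_mul_cos_thetaB (hβ : 0 < β) : √(1 + β) * cos (thetaB β) = √β := by
  rw [thetaB, cos_arctan, div_pow, one_pow, sq_sqrt hβ.le, one_add_div hβ.ne', sqrt_div' _ hβ.le,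
    add_comm β]
  field_simp

lemma thetaB_mem_Ioo (hβ : 0 < β) : thetaB β ∈ Ioo 0 (π / 2) :=
  ⟨arctan_pos.2 (by positivity), arctan_lt_pi_div_two _⟩

lemma sqrt_mul_sin_sub_cos (hβ : 0 < β) (θ : ℝ) :
    √β * sin θ - cos θ = √(1 + β) * sin (θ - thetaB β) := by
  rw [sin_sub]
  linear_combination cos θ * sqrt_one_add_mul_sin_thetaB hβ -
    sin θ * sqrt_one_add_mul_cos_thetaB hβ

lemma sin_add_sqrt_mul_cos (hβ : 0 < β) (θ : ℝ) :
    sin θ + √β * cos θ = √(1 + β) * cos (θ - thetaB β) := by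
  rw [cos_sub]
  linear_combination -sin θ * sqrt_one_add_mul_sin_thetaB hβ -
    cos θ * sqrt_one_add_mul_cos_thetaB hβ

lemma sin_sub_thetaB_ne_zero (hβ : 0 < β) (hθ : θ ∈ Ioo 0 (π / 2)) (hne : θ ≠ thetaB β) :
    sin (θ - thetaB β) ≠ 0 := by
  have hB := thetaB_mem_Ioo hβ
  rw [Ne, sin_eq_zero_iff_of_lt_of_lt (by linarith [hθ.1, hB.2, pi_pos])
    (by linarith [hθ.2, hB.1, pi_pos])]
  exact sub_ne_zero.2 hne

lemma Dfun_eq_sin_sub (hβ : 0 < β) (d θ W : ℝ) :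
    Dfun d β θ W = d ^ 2 * (1 + β) / β * sin (θ - thetaB β) ^ 2 + W ^ 2 := by
  rw [Dfun, sqrt_mul_sin_sub_cos hβ, mul_pow, sq_sqrt (by positivity)]
  ring

lemma Dfun_eq_axis_add_sq (d β θ W : ℝ) : Dfun d β θ W = Dfun d β θ 0 + W ^ 2 := by
  simp [Dfun]

lemma sqrt_Dfun_axis (hd : 0 < d) (hβ : 0 < β) (θ : ℝ) :
    √(Dfun d β θ 0) = d * √(1 + β) / √β * |sin (θ - thetaB β)| := by
  rw [Dfun_eq_sin_sub hβ, zero_pow two_ne_zero, add_zero, sqrt_mul (by positivity),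
    sqrt_sq_eq_abs, sqrt_div (by positivity), sqrt_mul (by positivity), sqrt_sq hd.le]

lemma continuous_Dfun (d β : ℝ) : Continuous fun p : ℝ × ℝ => Dfun d β p.1 p.2 := by
  unfold Dfun
  fun_prop

lemma Dfun_nonneg (hβ : 0 < β) (d θ W : ℝ) : 0 ≤ Dfun d β θ W := by
  unfold Dfun
  positivity

lemma Dfun_axis_pos (hd : 0 < d) (hβ : 0 < β) (hθ : θ ∈ Ioo 0 (π / 2)) (hne : θ ≠ thetaB β) :
    0 < Dfun d β θ 0 := by
  have := sin_sub_thetaB_ne_zero hβ hθ hne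
  rw [Dfun_eq_sin_sub hβ]
  positivity

lemma mem_OmegaB_iff (hd : 0 < d) (hβ : 0 < β) :
    (θ, W) ∈ OmegaB β ↔ θ ∈ Ioo 0 (π / 2) ∧ 0 < Dfun d β θ W := by
  simp only [OmegaB, mem_ofPred_eq, ← and_assoc, mem_Ioo, and_congr_right_iff]
  intro hθ
  have hne : (θ, W) ≠ (thetaB β, 0) ↔ θ ≠ thetaB β ∨ W ≠ 0 := by
    rw [Ne, Prod.mk_inj, not_and_or]
  rw [hne]
  refine ⟨?_, fun hD => ?_⟩
  · rintro (hne | hW)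
    · rw [Dfun_eq_axis_add_sq]
      exact add_pos_of_pos_of_nonneg (Dfun_axis_pos hd hβ hθ hne) (sq_nonneg W)
    · rw [Dfun_eq_axis_add_sq]
      exact add_pos_of_nonneg_of_pos (Dfun_nonneg hβ d θ 0) (sq_pos_of_ne_zero hW)
  · contrapose! hD
    simp [hD, Dfun_eq_sin_sub hβ]

lemma axis_mem_OmegaB (hθ : θ ∈ Ioo 0 (π / 2)) (hne : θ ≠ thetaB β) : (θ, 0) ∈ OmegaB β :=
  ⟨hθ.1, hθ.2, fun h => hne (Prod.mk_inj.1 h).1⟩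

end Geometry

section Energy

variable {α d β θ W E : ℝ}

/-- The part of the Hamiltonian that depends neither on `W` nor on the interaction strength `α`. -/
def selfEnergy (d β θ : ℝ) : ℝ :=
  1 / (2 * d) * (β ^ ((3 : ℝ) / 2) * (log (1 - sin θ) - log (1 + sin θ)) +
    (log (1 - cos θ) - log (1 + cos θ)))

/-- The derivative of `selfEnergy d β` on `(0, π / 2)`. -/
def selfEnergyDeriv (d β θ : ℝ) : ℝ :=
  (1 / sin θ - β ^ ((3 : ℝ) / 2) / cos θ) / d

lemma hasDerivAt_selfEnergy (hd : d ≠ 0) (hθ : θ ∈ Ioo 0 (π / 2)) :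
    HasDerivAt (selfEnergy d β) (selfEnergyDeriv d β θ) θ := by
  obtain ⟨hs₀, hs₁⟩ := sin_mem_Ioo_zero_one hθ
  obtain ⟨hc₀, hc₁⟩ := cos_mem_Ioo_zero_one hθ
  have hsin := (hasDerivAt_log_one_sub_sub_log_one_add (x := sin θ) (by linarith)
    (by linarith)).comp θ (hasDerivAt_sin θ)
  have hcos := (hasDerivAt_log_one_sub_sub_log_one_add (x := cos θ) (by linarith)
    (by linarith)).comp θ (hasDerivAt_cos θ)
  refine (((hsin.const_mul (β ^ ((3 : ℝ) / 2))).add hcos).const_mul (1 / (2 * d))).congr_deriv ?_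
  rw [← cos_sq', ← sin_sq, selfEnergyDeriv]
  field_simp
  ring

lemma strictAntiOn_selfEnergyDeriv (hd : 0 < d) (hβ : 0 < β) :
    StrictAntiOn (selfEnergyDeriv d β) (Ioo 0 (π / 2)) := by
  intro x hx y hy hxy
  have hsin : sin x < sin y :=
    sin_lt_sin_of_lt_of_le_pi_div_two (by linarith [hx.1, pi_pos]) hy.2.le hxy
  have hcos : cos y < cos x :=
    cos_lt_cos_of_nonneg_of_le_pi_div_two hx.1.le hy.2.le hxy
  have := (sin_mem_Ioo_zero_one hx).1
  have := (cos_mem_Ioo_zero_one hy).1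
  unfold selfEnergyDeriv
  gcongr

lemma concaveOn_selfEnergy (hd : 0 < d) (hβ : 0 < β) :
    ConcaveOn ℝ (Ioo 0 (π / 2)) (selfEnergy d β) := by
  have hderiv := fun θ (hθ : θ ∈ Ioo 0 (π / 2)) => hasDerivAt_selfEnergy (β := β) hd.ne' hθ
  refine AntitoneOn.concaveOn_of_deriv (convex_Ioo _ _)
    (fun θ hθ => (hderiv θ hθ).continuousAt.continuousWithinAt) ?_ ?_
  · rw [interior_Ioo]
    exact fun θ hθ => (hderiv θ hθ).differentiableAt.differentiableWithinAt
  · rw [interior_Ioo]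
    exact (strictAntiOn_selfEnergyDeriv hd hβ).antitoneOn.congr
      fun θ hθ => (hderiv θ hθ).deriv.symm

lemma ham_eq_selfEnergy_sub (hθ : θ ∈ Ioo 0 (π / 2)) :
    Ham α d β θ W = selfEnergy d β θ - α * √β / √(Dfun d β θ W) := by
  obtain ⟨hs₀, hs₁⟩ := sin_mem_Ioo_zero_one hθ
  obtain ⟨hc₀, hc₁⟩ := cos_mem_Ioo_zero_one hθ
  have hs : 0 < 1 - sin θ := by linarith
  have hs' : 0 < 1 + sin θ := by linarith
  have hc : 1 - cos θ ≠ 0 := by linarith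
  have hc' : 1 + cos θ ≠ 0 := by linarith
  have hp := (rpow_pos_of_pos hs (β ^ ((3 : ℝ) / 2))).ne'
  have hp' := (rpow_pos_of_pos hs' (β ^ ((3 : ℝ) / 2))).ne'
  rw [Ham, selfEnergy, log_div (mul_ne_zero hp hc) (mul_ne_zero hp' hc'), log_mul hp hc,
    log_mul hp' hc', log_rpow hs, log_rpow hs', ← sqrt_eq_rpow]
  ring

lemma ham_lt_selfEnergy (hα : 0 < α) (hd : 0 < d) (hβ : 0 < β) (hp : (θ, W) ∈ OmegaB β) :
    Ham α d β θ W < selfEnergy d β θ := by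
  obtain ⟨hθ, hD⟩ := (mem_OmegaB_iff hd hβ).1 hp
  rw [ham_eq_selfEnergy_sub hθ]
  exact sub_lt_self _ (by positivity)

lemma ham_axis_le (hα : 0 < α) (hd : 0 < d) (hβ : 0 < β) (hθ : θ ∈ Ioo 0 (π / 2))
    (hne : θ ≠ thetaB β) (W : ℝ) : Ham α d β θ 0 ≤ Ham α d β θ W := by
  have hD := Dfun_axis_pos hd hβ hθ hne
  have hle : Dfun d β θ 0 ≤ Dfun d β θ W := by
    rw [Dfun_eq_axis_add_sq d β θ W]
    exact le_add_of_nonneg_right (sq_nonneg W)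
  rw [ham_eq_selfEnergy_sub hθ, ham_eq_selfEnergy_sub hθ]
  gcongr

lemma ham_eq_iff_Dfun_eq (hα : 0 < α) (hd : 0 < d) (hβ : 0 < β) (hp : (θ, W) ∈ OmegaB β)
    (hE : E < selfEnergy d β θ) :
    Ham α d β θ W = E ↔ Dfun d β θ W = (α * √β / (selfEnergy d β θ - E)) ^ 2 := by
  obtain ⟨hθ, hD⟩ := (mem_OmegaB_iff hd hβ).1 hp
  have hgap : 0 < selfEnergy d β θ - E := sub_pos.2 hE
  rw [ham_eq_selfEnergy_sub hθ, ← sqrt_eq_iff_eq_sq hD.le (by positivity), eq_div_iff hgap.ne',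
    sub_eq_iff_eq_add, ← sub_eq_iff_eq_add', eq_div_iff (sqrt_pos.2 hD).ne', mul_comm]

end Energy

section VectorField

variable {α d β θ W : ℝ}

/-- The right-hand side of the system, as a vector field on the `(θ, W)`-plane. -/
def leapfrogField (α d β : ℝ) (p : ℝ × ℝ) : ℝ × ℝ :=
  (F1 α d β p.1 p.2, F2 α d β p.1 p.2)

lemma leapfrogField_reflect (α d β : ℝ) (p : ℝ × ℝ) :
    leapfrogField α d β (p.1, -p.2) = (-F1 α d β p.1 p.2, F2 α d β p.1 p.2) := by
  simp [leapfrogField, F1, F2, Dfun, neg_div]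

lemma F1_axis (α d β θ : ℝ) : F1 α d β θ 0 = 0 := by
  simp [F1]

lemma F1_ne_zero (hα : 0 < α) (hd : 0 < d) (hβ : 0 < β) (hp : (θ, W) ∈ OmegaB β) (hW : W ≠ 0) :
    F1 α d β θ W ≠ 0 := by
  have := ((mem_OmegaB_iff hd hβ).1 hp).2
  unfold F1
  positivity

lemma F2_eq_neg_selfEnergyDeriv_add (hβ : 0 < β) (hθ : θ ∈ Ioo 0 (π / 2)) :
    F2 α d β θ W = -(selfEnergyDeriv d β θ +
      α * d ^ 2 * (sin θ + √β * cos θ) * (√β * sin θ - cos θ) / (√β * √(Dfun d β θ W) ^ 3)) := by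
  have := (sin_mem_Ioo_zero_one hθ).1
  have := (cos_mem_Ioo_zero_one hθ).1
  rw [F2, selfEnergyDeriv, rpow_three_halves (Dfun_nonneg hβ d θ W), neg_add, ← sub_eq_add_neg]
  congr 1
  field_simp
  ring

lemma contDiffAt_leapfrogField (hd : 0 < d) (hβ : 0 < β) {p : ℝ × ℝ} (hp : p ∈ OmegaB β) :
    ContDiffAt ℝ 1 (leapfrogField α d β) p := by
  obtain ⟨hθ, hD⟩ := (mem_OmegaB_iff hd hβ).1 hp
  have hsin := (sin_mem_Ioo_zero_one hθ).1.ne'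
  have hcos := (cos_mem_Ioo_zero_one hθ).1.ne'
  have hpow : ContDiffAt ℝ 1 (fun q : ℝ × ℝ => Dfun d β q.1 q.2 ^ ((3 : ℝ) / 2)) p := by
    refine ContDiffAt.rpow_const_of_ne ?_ hD.ne'
    unfold Dfun
    fun_prop
  have hpow₀ : Dfun d β p.1 p.2 ^ ((3 : ℝ) / 2) ≠ 0 := (rpow_pos_of_pos hD _).ne'
  unfold leapfrogField F1 F2
  refine (ContDiffAt.div (by fun_prop) hpow hpow₀).prodMk
    ((ContDiffAt.div (by fun_prop) (by fun_prop) ?_).sub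
      (ContDiffAt.div (by fun_prop) (by fun_prop) ?_))
  · exact mul_ne_zero (mul_ne_zero hd.ne' hsin) hcos
  · exact mul_ne_zero (sqrt_ne_zero'.2 hβ) hpow₀

lemma hasDerivAt_Dfun {θ W : ℝ → ℝ} {θ' W' t : ℝ} (hθ : HasDerivAt θ θ' t)
    (hW : HasDerivAt W W' t) :
    HasDerivAt (fun s => Dfun d β (θ s) (W s))
      (2 * (d ^ 2 / β * (sin (θ t) + √β * cos (θ t)) * (√β * sin (θ t) - cos (θ t)) * θ' +
        W t * W')) t := by
  refine (((((hθ.sin.const_mul √β).sub hθ.cos).pow 2).const_mul (d ^ 2 / β)).add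
    (hW.pow 2)).congr_deriv ?_
  simp only [Pi.sub_apply]
  push_cast
  ring

lemma hasDerivAt_ham (hd : 0 < d) (hβ : 0 < β) {θ W : ℝ → ℝ} {θ' W' t : ℝ}
    (hp : (θ t, W t) ∈ OmegaB β) (hθ : HasDerivAt θ θ' t) (hW : HasDerivAt W W' t) :
    HasDerivAt (fun s => Ham α d β (θ s) (W s))
      (-F2 α d β (θ t) (W t) * θ' + F1 α d β (θ t) (W t) * W') t := by
  obtain ⟨hmem, hD⟩ := (mem_OmegaB_iff hd hβ).1 hp
  have hS : √(Dfun d β (θ t) (W t)) ≠ 0 := (sqrt_pos.2 hD).ne'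
  have hdecomp : (fun s => Ham α d β (θ s) (W s)) =ᶠ[𝓝 t]
      fun s => selfEnergy d β (θ s) - α * √β / √(Dfun d β (θ s) (W s)) :=
    (hθ.continuousAt.eventually (isOpen_Ioo.mem_nhds hmem)).mono
      fun s hs => ham_eq_selfEnergy_sub hs
  refine HasDerivAt.congr_of_eventuallyEq ?_ hdecomp
  refine (((hasDerivAt_selfEnergy hd.ne' hmem).comp t hθ).sub
    ((hasDerivAt_const t (α * √β)).div ((hasDerivAt_Dfun hθ hW).sqrt hD.ne') hS)).congr_deriv ?_
  rw [F1, F2_eq_neg_selfEnergyDeriv_add hβ hmem, rpow_three_halves hD.le]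
  have hβ' : β = √β ^ 2 := (sq_sqrt hβ.le).symm
  generalize selfEnergyDeriv d β (θ t) = g
  generalize √(Dfun d β (θ t) (W t)) = S at *
  have : 0 < √β := sqrt_pos.2 hβ
  generalize √β = b at *
  subst hβ'
  field_simp
  ring

end VectorField

section Axis

variable {α d β θ φ ψ a b c : ℝ}

/-- The derivative of `-1 / |sin φ|`. Up to a positive factor, it is the contribution of the
interaction to the derivative of the Hamiltonian along the axis `W = 0`, where `φ` is the angle
measured from `thetaB β`. -/
def axisInteraction (φ : ℝ) : ℝ :=
  cos φ / (sin φ * |sin φ|)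

lemma axisInteraction_neg (φ : ℝ) : axisInteraction (-φ) = -axisInteraction φ := by
  simp [axisInteraction, div_neg]

lemma axisInteraction_lt_of_pos (hφ : 0 < φ) (hφψ : φ < ψ) (hψ : ψ < π / 2) :
    axisInteraction ψ < axisInteraction φ := by
  have hφs : 0 < sin φ := sin_pos_of_pos_of_lt_pi hφ (by linarith [pi_pos])
  have hsin : sin φ < sin ψ :=
    sin_lt_sin_of_lt_of_le_pi_div_two (by linarith) hψ.le hφψ
  have hcos : cos ψ < cos φ := cos_lt_cos_of_nonneg_of_le_pi_div_two hφ.le hψ.le hφψ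
  have hcosψ : 0 ≤ cos ψ := cos_nonneg_of_mem_Icc ⟨by linarith, hψ.le⟩
  have hcosφ := hcosψ.trans hcos.le
  have hψs := hφs.trans hsin
  unfold axisInteraction
  rw [abs_of_pos hφs, abs_of_pos hψs]
  gcongr

lemma axisInteraction_lt (hφ : -(π / 2) < φ) (hφψ : φ < ψ) (hψ : ψ < π / 2)
    (hsign : 0 < φ ∨ ψ < 0) : axisInteraction ψ < axisInteraction φ := by
  rcases hsign with hpos | hneg
  · exact axisInteraction_lt_of_pos hpos hφψ hψ
  · have := axisInteraction_lt_of_pos (neg_pos.2 hneg) (neg_lt_neg hφψ) (by linarith)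
    rwa [axisInteraction_neg, axisInteraction_neg, neg_lt_neg_iff] at this

lemma F2_axis_eq (hd : 0 < d) (hβ : 0 < β) (hθ : θ ∈ Ioo 0 (π / 2)) (hne : θ ≠ thetaB β) :
    F2 α d β θ 0 = -(selfEnergyDeriv d β θ +
      α * β / (d * √(1 + β)) * axisInteraction (θ - thetaB β)) := by
  have hsin := sin_sub_thetaB_ne_zero hβ hθ hne
  have hβ' : β = √β ^ 2 := (sq_sqrt hβ.le).symm
  rw [F2_eq_neg_selfEnergyDeriv_add hβ hθ, sqrt_Dfun_axis hd hβ, sin_add_sqrt_mul_cos hβ,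
    sqrt_mul_sin_sub_cos hβ, axisInteraction]
  congr 2
  have : 0 < √(1 + β) := by positivity
  generalize √(1 + β) = R at *
  have : 0 < √β := sqrt_pos.2 hβ
  generalize √β = b at *
  subst hβ'
  generalize sin (θ - thetaB (b ^ 2)) = s at *
  have := abs_pos.2 hsin
  field_simp
  rw [sq_abs]

lemma strictMonoOn_F2_axis (hα : 0 < α) (hd : 0 < d) (hβ : 0 < β)
    (hsub : Ioo a b ⊆ Ioo 0 (π / 2)) (hB : thetaB β ∉ Ioo a b) :
    StrictMonoOn (fun θ => F2 α d β θ 0) (Ioo a b) := by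
  intro x hx y hy hxy
  have hBI := thetaB_mem_Ioo hβ
  have hself := strictAntiOn_selfEnergyDeriv hd hβ (hsub hx) (hsub hy) hxy
  have hsign : 0 < x - thetaB β ∨ y - thetaB β < 0 := by
    simp only [sub_pos, sub_neg]
    by_contra! hmem
    exact hB ⟨hx.1.trans_le hmem.1, hmem.2.trans_lt hy.2⟩
  have hinter : axisInteraction (y - thetaB β) < axisInteraction (x - thetaB β) :=
    axisInteraction_lt (by linarith [hBI.2, (hsub hx).1]) (by linarith)
      (by linarith [hBI.1, (hsub hy).2]) hsign
  simp only [F2_axis_eq hd hβ (hsub hx) (ne_of_mem_of_not_mem hx hB),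
    F2_axis_eq hd hβ (hsub hy) (ne_of_mem_of_not_mem hy hB)]
  gcongr

lemma ham_axis_unimodal (hα : 0 < α) (hd : 0 < d) (hβ : 0 < β) (hsub : Ioo a b ⊆ Ioo 0 (π / 2))
    (hB : thetaB β ∉ Ioo a b) (hc : c ∈ Ioo a b) (h₀ : F2 α d β c 0 = 0) :
    StrictMonoOn (fun θ => Ham α d β θ 0) (Ioc a c) ∧
      StrictAntiOn (fun θ => Ham α d β θ 0) (Ico c b) := by
  refine strictMonoOn_Ioc_and_strictAntiOn_Ico_of_hasDerivAt hc (fun θ hθ => ?_)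
    (strictMonoOn_F2_axis hα hd hβ hsub hB).neg (neg_eq_zero.2 h₀)
  refine (hasDerivAt_ham hd hβ (axis_mem_OmegaB (hsub hθ) (ne_of_mem_of_not_mem hθ hB))
    (hasDerivAt_id θ) (hasDerivAt_const θ 0)).congr_deriv ?_
  simp

/-- The numerator of `F2 α d β θ 0`, up to a positive factor. Unlike `F2`, it is continuous also at
`0`, `thetaB β` and `π / 2`. -/
def axisNumerator (α β θ : ℝ) : ℝ :=
  (β ^ ((3 : ℝ) / 2) * sin θ - cos θ) * (sin (θ - thetaB β) * |sin (θ - thetaB β)|) -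
    α * β / √(1 + β) * (sin θ * cos θ * cos (θ - thetaB β))

lemma F2_axis_eq_zero_of_axisNumerator_eq_zero (hd : 0 < d) (hβ : 0 < β) (hθ : θ ∈ Ioo 0 (π / 2))
    (hne : θ ≠ thetaB β) (h₀ : axisNumerator α β θ = 0) : F2 α d β θ 0 = 0 := by
  have := sin_sub_thetaB_ne_zero hβ hθ hne
  have := (sin_mem_Ioo_zero_one hθ).1
  have := (cos_mem_Ioo_zero_one hθ).1
  have hfactor : F2 α d β θ 0 = axisNumerator α β θ /
      (d * sin θ * cos θ * (sin (θ - thetaB β) * |sin (θ - thetaB β)|)) := by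
    rw [F2_axis_eq hd hβ hθ hne, selfEnergyDeriv, axisInteraction, axisNumerator]
    field_simp
    ring
  rw [hfactor, h₀, zero_div]

/-- `(θs, 0)` and `(θss, 0)` are equilibria of the system, one on each side of `thetaB β`. -/
structure IsEquilibriumPair (α d β θs θss : ℝ) : Prop where
  left_mem : θs ∈ Ioo 0 (thetaB β)
  right_mem : θss ∈ Ioo (thetaB β) (π / 2)
  F2_left : F2 α d β θs 0 = 0
  F2_right : F2 α d β θss 0 = 0

theorem exists_isEquilibriumPair (hα : 0 < α) (hd : 0 < d) (hβ : 0 < β) :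
    ∃ θs θss, IsEquilibriumPair α d β θs θss := by
  have hB := thetaB_mem_Ioo hβ
  have hcont : Continuous (axisNumerator α β) := by
    unfold axisNumerator
    fun_prop
  have hzero : 0 < axisNumerator α β 0 := by
    have := (sin_mem_Ioo_zero_one hB).1
    suffices 0 < sin (thetaB β) * |sin (thetaB β)| by simpa [axisNumerator]
    positivity
  have hthetaB : axisNumerator α β (thetaB β) < 0 := by
    have := (sin_mem_Ioo_zero_one hB).1
    have := (cos_mem_Ioo_zero_one hB).1
    simp only [axisNumerator, sub_self, sin_zero, abs_zero, mul_zero, cos_zero, mul_one, zero_sub,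
      Left.neg_neg_iff]
    positivity
  have hpi : 0 < axisNumerator α β (π / 2) := by
    have := (cos_mem_Ioo_zero_one hB).1
    suffices 0 < β ^ ((3 : ℝ) / 2) * (cos (thetaB β) * |cos (thetaB β)|) by
      simpa [axisNumerator, sin_pi_div_two_sub]
    positivity
  obtain ⟨θs, hs, hs₀⟩ := intermediate_value_Ioo' hB.1.le hcont.continuousOn ⟨hthetaB, hzero⟩
  obtain ⟨θss, hss, hss₀⟩ := intermediate_value_Ioo hB.2.le hcont.continuousOn ⟨hthetaB, hpi⟩
  refine ⟨θs, θss, hs, hss, ?_, ?_⟩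
  · exact F2_axis_eq_zero_of_axisNumerator_eq_zero hd hβ ⟨hs.1, hs.2.trans hB.2⟩ hs.2.ne hs₀
  · exact F2_axis_eq_zero_of_axisNumerator_eq_zero hd hβ ⟨hB.1.trans hss.1, hss.2⟩ hss.1.ne' hss₀

end Axis

section Equilibria

namespace IsEquilibriumPair

variable {α d β θs θss θ W : ℝ}

lemma left_mem_Ioo (h : IsEquilibriumPair α d β θs θss) (hβ : 0 < β) : θs ∈ Ioo 0 (π / 2) :=
  Ioo_subset_Ioo_right (thetaB_mem_Ioo hβ).2.le h.left_mem

lemma right_mem_Ioo (h : IsEquilibriumPair α d β θs θss) (hβ : 0 < β) : θss ∈ Ioo 0 (π / 2) :=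
  Ioo_subset_Ioo_left (thetaB_mem_Ioo hβ).1.le h.right_mem

lemma leapfrogField_left (h : IsEquilibriumPair α d β θs θss) :
    leapfrogField α d β (θs, 0) = 0 :=
  Prod.ext (F1_axis α d β θs) h.F2_left

lemma leapfrogField_right (h : IsEquilibriumPair α d β θs θss) :
    leapfrogField α d β (θss, 0) = 0 :=
  Prod.ext (F1_axis α d β θss) h.F2_right

theorem eq_or_eq_of_leapfrogField_eq_zero (h : IsEquilibriumPair α d β θs θss) (hα : 0 < α)
    (hd : 0 < d) (hβ : 0 < β) {p : ℝ × ℝ} (hp : p ∈ OmegaB β) (h₀ : leapfrogField α d β p = 0) :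
    p = (θs, 0) ∨ p = (θss, 0) := by
  obtain ⟨θ, W⟩ := p
  obtain ⟨hF1, hF2⟩ := Prod.mk_inj.1 h₀
  have hB := thetaB_mem_Ioo hβ
  obtain rfl : W = 0 := by
    by_contra hW
    exact F1_ne_zero hα hd hβ hp hW hF1
  have hne : θ ≠ thetaB β := by
    rintro rfl
    exact hp.2.2 rfl
  rcases hne.lt_or_gt with hlt | hgt
  · exact .inl <| Prod.ext ((strictMonoOn_F2_axis hα hd hβ (Ioo_subset_Ioo_right hB.2.le)
      right_notMem_Ioo).injOn ⟨hp.1, hlt⟩ h.left_mem (hF2.trans h.F2_left.symm)) rfl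
  · exact .inr <| Prod.ext ((strictMonoOn_F2_axis hα hd hβ (Ioo_subset_Ioo_left hB.1.le)
      left_notMem_Ioo).injOn ⟨hgt, hp.2.1⟩ h.right_mem (hF2.trans h.F2_right.symm)) rfl

lemma ham_left_unimodal (h : IsEquilibriumPair α d β θs θss) (hα : 0 < α) (hd : 0 < d)
    (hβ : 0 < β) :
    StrictMonoOn (fun θ => Ham α d β θ 0) (Ioc 0 θs) ∧
      StrictAntiOn (fun θ => Ham α d β θ 0) (Ico θs (thetaB β)) :=
  ham_axis_unimodal hα hd hβ (Ioo_subset_Ioo_right (thetaB_mem_Ioo hβ).2.le) right_notMem_Ioo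
    h.left_mem h.F2_left

lemma ham_right_unimodal (h : IsEquilibriumPair α d β θs θss) (hα : 0 < α) (hd : 0 < d)
    (hβ : 0 < β) :
    StrictMonoOn (fun θ => Ham α d β θ 0) (Ioc (thetaB β) θss) ∧
      StrictAntiOn (fun θ => Ham α d β θ 0) (Ico θss (π / 2)) :=
  ham_axis_unimodal hα hd hβ (Ioo_subset_Ioo_left (thetaB_mem_Ioo hβ).1.le) left_notMem_Ioo
    h.right_mem h.F2_right

theorem leapfrogField_ne_zero_of_ham_lt (h : IsEquilibriumPair α d β θs θss) (hα : 0 < α)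
    (hd : 0 < d) (hβ : 0 < β) (hp : (θ, W) ∈ OmegaB β)
    (hE : Ham α d β θ W < min (Ham α d β θs 0) (Ham α d β θss 0)) :
    leapfrogField α d β (θ, W) ≠ 0 := by
  intro h₀
  rcases h.eq_or_eq_of_leapfrogField_eq_zero hα hd hβ hp h₀ with heq | heq <;>
    obtain ⟨rfl, rfl⟩ := Prod.mk_inj.1 heq
  · exact (lt_min_iff.1 hE).1.false
  · exact (lt_min_iff.1 hE).2.false

lemma lt_selfEnergy_of_lt_min (h : IsEquilibriumPair α d β θs θss) (hα : 0 < α) (hd : 0 < d)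
    (hβ : 0 < β) {E : ℝ} (hE : E < min (Ham α d β θs 0) (Ham α d β θss 0))
    (hθ : θ ∈ Icc θs θss) : E < selfEnergy d β θ := by
  have hs := h.left_mem_Ioo hβ
  have hss := h.right_mem_Ioo hβ
  calc E < min (Ham α d β θs 0) (Ham α d β θss 0) := hE
    _ ≤ min (selfEnergy d β θs) (selfEnergy d β θss) :=
      min_le_min
        (ham_lt_selfEnergy hα hd hβ (axis_mem_OmegaB hs h.left_mem.2.ne)).le
        (ham_lt_selfEnergy hα hd hβ (axis_mem_OmegaB hss h.right_mem.1.ne')).le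
    _ ≤ selfEnergy d β θ := (concaveOn_selfEnergy hd hβ).min_le_of_mem_Icc hs hss hθ

end IsEquilibriumPair

end Equilibria

section Solutions

namespace IsSolution

variable {α d β a b t₀ : ℝ} {θ W : ℝ → ℝ}

lemma isIntegralCurve (h : IsSolution α d β θ W) :
    IsIntegralCurve (fun t => (θ t, W t)) fun _ => leapfrogField α d β :=
  fun t => (h.2.1 t).prodMk (h.2.2 t)

lemma continuous_fst (h : IsSolution α d β θ W) : Continuous θ :=
  continuous_iff_continuousAt.2 fun t => (h.2.1 t).continuousAt

lemma continuous_snd (h : IsSolution α d β θ W) : Continuous W :=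
  continuous_iff_continuousAt.2 fun t => (h.2.2 t).continuousAt

lemma ham_eq (h : IsSolution α d β θ W) (hd : 0 < d) (hβ : 0 < β) (s t : ℝ) :
    Ham α d β (θ s) (W s) = Ham α d β (θ t) (W t) := by
  have hderiv (r : ℝ) : HasDerivAt (fun r => Ham α d β (θ r) (W r)) 0 r :=
    (hasDerivAt_ham hd hβ (h.1 r) (h.2.1 r) (h.2.2 r)).congr_deriv (by ring)
  exact is_const_of_deriv_eq_zero (fun r => (hderiv r).differentiableAt)
    (fun r => (hderiv r).deriv) s t

lemma leapfrogField_ne_zero (h : IsSolution α d β θ W) (hd : 0 < d) (hβ : 0 < β) {r s : ℝ}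
    (hne : (θ r, W r) ≠ (θ s, W s)) (t : ℝ) : leapfrogField α d β (θ t, W t) ≠ 0 := by
  intro h₀
  have hconst := eq_of_isIntegralCurve_of_contDiffAt (t₀ := t)
    (fun _ => contDiffAt_leapfrogField hd hβ (h.1 t)) (isIntegralCurve_const fun _ => h₀)
    h.isIntegralCurve rfl
  exact hne ((congrFun hconst r).symm.trans (congrFun hconst s))

lemma exists_snd_ne_zero (h : IsSolution α d β θ W)
    (h₀ : leapfrogField α d β (θ t₀, W t₀) ≠ 0) : ∃ t, W t ≠ 0 := by
  by_contra! hW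
  obtain rfl : W = fun _ => 0 := funext hW
  exact h₀ (Prod.ext (F1_axis α d β (θ t₀)) ((h.2.2 t₀).unique (hasDerivAt_const t₀ 0)))

lemma snd_eq_zero_of_isLocalExtr (h : IsSolution α d β θ W) (hα : 0 < α) (hd : 0 < d)
    (hβ : 0 < β) (hext : IsLocalExtr θ t₀) : W t₀ = 0 := by
  by_contra hW
  exact F1_ne_zero hα hd hβ (h.1 t₀) hW (hext.hasDerivAt_eq_zero (h.2.1 t₀))

lemma periodic_of_snd_eq_zero (h : IsSolution α d β θ W) (hd : 0 < d) (hβ : 0 < β)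
    (ha : W a = 0) (hb : W b = 0) :
    Function.Periodic (fun t => (θ t, W t)) (2 * (b - a)) := by
  refine periodic_of_isIntegralCurve_of_reversible (v := leapfrogField α d β)
    (σ := (ContinuousLinearMap.id ℝ ℝ).prodMap (-ContinuousLinearMap.id ℝ ℝ))
    (fun t => contDiffAt_leapfrogField hd hβ (h.1 t)) h.isIntegralCurve (fun p => ?_) ?_ ?_
  · simpa [leapfrogField] using leapfrogField_reflect α d β p
  · simp [ha]
  · simp [hb]

lemma exists_fst_lt_fst_of_periodic (h : IsSolution α d β θ W) (hα : 0 < α) (hd : 0 < d)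
    (hβ : 0 < β) {T : ℝ} (hT : T ≠ 0) (hper : Function.Periodic θ T) (hW : W t₀ ≠ 0) :
    ∃ m M, W m = 0 ∧ W M = 0 ∧ θ m < θ M := by
  have hcompact : IsCompact (range θ) := hper.compact_of_continuous hT h.continuous_fst
  obtain ⟨_, ⟨m, rfl⟩, hm⟩ := hcompact.exists_isLeast (range_nonempty θ)
  obtain ⟨_, ⟨M, rfl⟩, hM⟩ := hcompact.exists_isGreatest (range_nonempty θ)
  rw [mem_lowerBounds, forall_mem_range] at hm
  rw [mem_upperBounds, forall_mem_range] at hM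
  have hmin {t : ℝ} (ht : ∀ s, θ t ≤ θ s) : W t = 0 :=
    h.snd_eq_zero_of_isLocalExtr hα hd hβ (.inl (Eventually.of_forall ht))
  refine ⟨m, M, hmin hm,
    h.snd_eq_zero_of_isLocalExtr hα hd hβ (.inr (Eventually.of_forall hM)), ?_⟩
  by_contra! hMm
  exact hW (hmin fun s => ((hM t₀).trans hMm).trans (hm s))

theorem exists_equilibrium_of_snd_ne_zero (h : IsSolution α d β θ W) (hα : 0 < α) (hd : 0 < d)
    (hβ : 0 < β) (hsub : Icc a b ⊆ Ioo 0 (π / 2)) (hθ : ∀ t, θ t ∈ Icc a b)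
    (hE : ∀ x ∈ Icc a b, Ham α d β (θ 0) (W 0) < selfEnergy d β x) (hW : ∀ t > t₀, W t ≠ 0) :
    ∃ p ∈ OmegaB β, leapfrogField α d β p = 0 ∧ Ham α d β p.1 p.2 = Ham α d β (θ 0) (W 0) := by
  set E := Ham α d β (θ 0) (W 0)
  have hlevel (t : ℝ) :
      Dfun d β (θ t) (W t) = (α * √β / (selfEnergy d β (θ t) - E)) ^ 2 :=
    (ham_eq_iff_Dfun_eq hα hd hβ (h.1 t) (hE _ (hθ t))).1 (h.ham_eq hd hβ t 0)
  have himage : θ '' Ici t₀ ⊆ Icc a b := image_subset_iff.2 fun t _ => hθ t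
  obtain ⟨x, hx⟩ := exists_tendsto_atTop_of_hasDerivAt_ne_zero (fun t _ => h.2.1 t)
    (fun t ht => F1_ne_zero hα hd hβ (h.1 t) (hW t ht)) (bddAbove_Icc.mono himage)
    (bddBelow_Icc.mono himage)
  have hxI : x ∈ Icc a b := isClosed_Icc.mem_of_tendsto hx (Eventually.of_forall hθ)
  have hgap : 0 < selfEnergy d β x - E := sub_pos.2 (hE x hxI)
  have hD : Tendsto (fun t => Dfun d β (θ t) (W t)) atTop
      (𝓝 ((α * √β / (selfEnergy d β x - E)) ^ 2)) := by
    simp only [hlevel]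
    exact (tendsto_const_nhds.div (((hasDerivAt_selfEnergy hd.ne'
      (hsub hxI)).continuousAt.tendsto.comp hx).sub_const E) hgap.ne').pow 2
  have hWsq : Tendsto (fun t => W t ^ 2) atTop (𝓝 (_ - Dfun d β x 0)) :=
    (hD.sub (((continuous_Dfun d β).tendsto (x, 0)).comp
      (hx.prodMk_nhds tendsto_const_nhds))).congr
      fun t => sub_eq_iff_eq_add'.2 (Dfun_eq_axis_add_sq d β (θ t) (W t))
  obtain ⟨w, hw⟩ := exists_tendsto_atTop_of_tendsto_sq h.continuous_snd hW hWsq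
  have hlim := hx.prodMk_nhds hw
  have hDw := tendsto_nhds_unique (((continuous_Dfun d β).tendsto (x, w)).comp hlim) hD
  have hp : (x, w) ∈ OmegaB β :=
    (mem_OmegaB_iff hd hβ).2 ⟨hsub hxI, hDw.symm ▸ by positivity⟩
  exact ⟨(x, w), hp, apply_eq_zero_of_isIntegralCurve_of_tendsto h.isIntegralCurve hlim
    (contDiffAt_leapfrogField hd hβ hp).continuousAt,
    (ham_eq_iff_Dfun_eq hα hd hβ hp (hE x hxI)).2 hDw⟩

end IsSolution

end Solutions

section Leapfrogging

namespace IsEquilibriumPair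

variable {α d β θs θss s t : ℝ} {θ W : ℝ → ℝ}

lemma mem_Ioo_of_ham_lt (h : IsEquilibriumPair α d β θs θss) (hα : 0 < α) (hd : 0 < d)
    (hβ : 0 < β) (hsol : IsSolution α d β θ W)
    (hE : Ham α d β (θ 0) (W 0) < min (Ham α d β θs 0) (Ham α d β θss 0))
    (hs : θs < θ s) (ht : θ t < θss) (r : ℝ) : θ r ∈ Ioo θs θss := by
  have hbarrier {c : ℝ} (hc : c ∈ Ioo 0 (π / 2)) (hcB : c ≠ thetaB β)
      (hEc : Ham α d β (θ 0) (W 0) < Ham α d β c 0) (r : ℝ) : θ r ≠ c := by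
    rintro rfl
    have hle := ham_axis_le hα hd hβ hc hcB (W r)
    exact (hEc.trans_le hle).ne (hsol.ham_eq hd hβ 0 r)
  obtain ⟨hEs, hEss⟩ := lt_min_iff.1 hE
  exact ⟨forall_gt_of_forall_ne hsol.continuous_fst
      (hbarrier (h.left_mem_Ioo hβ) h.left_mem.2.ne hEs) hs r,
    forall_lt_of_forall_ne hsol.continuous_fst
      (hbarrier (h.right_mem_Ioo hβ) h.right_mem.1.ne' hEss) ht r⟩

lemma exists_gt_snd_eq_zero (h : IsEquilibriumPair α d β θs θss) (hα : 0 < α) (hd : 0 < d)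
    (hβ : 0 < β) (hsol : IsSolution α d β θ W) (hθ : ∀ t, θ t ∈ Ioo θs θss)
    (hE : Ham α d β (θ 0) (W 0) < min (Ham α d β θs 0) (Ham α d β θss 0)) (t₀ : ℝ) :
    ∃ t > t₀, W t = 0 := by
  by_contra! hW
  obtain ⟨p, hp, hp₀, hpE⟩ := hsol.exists_equilibrium_of_snd_ne_zero hα hd hβ
    (Icc_subset_Ioo (h.left_mem_Ioo hβ).1 (h.right_mem_Ioo hβ).2)
    (fun t => Ioo_subset_Icc_self (hθ t))
    (fun x hx => h.lt_selfEnergy_of_lt_min hα hd hβ hE hx) hW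
  exact h.leapfrogField_ne_zero_of_ham_lt hα hd hβ hp (hpE.trans_lt hE) hp₀

lemma thetaB_mem_Ioo_of_ham_axis_eq (h : IsEquilibriumPair α d β θs θss) (hα : 0 < α)
    (hd : 0 < d) (hβ : 0 < β) {x y : ℝ} (hx : x ∈ Ioo θs θss) (hy : y ∈ Ioo θs θss)
    (hxB : x ≠ thetaB β) (hyB : y ≠ thetaB β) (hxy : x < y)
    (hE : Ham α d β x 0 = Ham α d β y 0) : thetaB β ∈ Ioo x y := by
  constructor
  · refine hxB.lt_or_gt.resolve_right fun hBx => ?_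
    exact ((h.ham_right_unimodal hα hd hβ).1 ⟨hBx, hx.2.le⟩ ⟨hBx.trans hxy, hy.2.le⟩ hxy).ne hE
  · refine hyB.lt_or_gt.resolve_left fun hyB => ?_
    exact ((h.ham_left_unimodal hα hd hβ).2 ⟨hx.1.le, hxy.trans hyB⟩ ⟨hy.1.le, hyB⟩ hxy).ne' hE

theorem isLeapfrog_of_ham_lt (h : IsEquilibriumPair α d β θs θss) (hα : 0 < α) (hd : 0 < d)
    (hβ : 0 < β) (hsol : IsSolution α d β θ W) (hθ₀ : θ 0 ∈ Ioo θs θss)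
    (hE : Ham α d β (θ 0) (W 0) < min (Ham α d β θs 0) (Ham α d β θss 0)) :
    IsLeapfrog β θ W := by
  have hθ := h.mem_Ioo_of_ham_lt hα hd hβ hsol hE hθ₀.1 hθ₀.2
  obtain ⟨a, -, ha⟩ := h.exists_gt_snd_eq_zero hα hd hβ hsol hθ hE 0
  obtain ⟨b, hab, hb⟩ := h.exists_gt_snd_eq_zero hα hd hβ hsol hθ hE a
  have hT : 0 < 2 * (b - a) := by linarith
  have hper := hsol.periodic_of_snd_eq_zero hd hβ ha hb
  obtain ⟨c, hc⟩ := hsol.exists_snd_ne_zero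
    (h.leapfrogField_ne_zero_of_ham_lt hα hd hβ (hsol.1 0) hE)
  obtain ⟨m, M, hm, hM, hmM⟩ := hsol.exists_fst_lt_fst_of_periodic hα hd hβ hT.ne'
    (fun t => congrArg Prod.fst (hper t)) hc
  have hne {t : ℝ} (ht : W t = 0) : θ t ≠ thetaB β := fun hB =>
    (hsol.1 t).2.2 (Prod.ext hB ht)
  have hB := h.thetaB_mem_Ioo_of_ham_axis_eq hα hd hβ (hθ m) (hθ M) (hne hm) (hne hM) hmM
    (by simpa only [hm, hM] using hsol.ham_eq hd hβ m M)
  exact ⟨⟨_, hT, fun t => Prod.mk_inj.1 (hper t)⟩,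
    ⟨c, a, fun h => hc ((Prod.mk_inj.1 h).2.trans ha)⟩,
    ⟨m, ⟨h.left_mem.1.trans (hθ m).1, hB.1⟩, hm⟩, M, ⟨hB.2, (hθ M).2.trans h.right_mem.2⟩, hM⟩

theorem mem_Ioo_and_ham_lt_of_isLeapfrog (h : IsEquilibriumPair α d β θs θss) (hα : 0 < α)
    (hd : 0 < d) (hβ : 0 < β) (hsol : IsSolution α d β θ W) (hleap : IsLeapfrog β θ W) :
    θ 0 ∈ Ioo θs θss ∧
      Ham α d β (θ 0) (W 0) < min (Ham α d β θs 0) (Ham α d β θss 0) := by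
  obtain ⟨-, ⟨r, s, hrs⟩, ⟨t₁, ht₁, hW₁⟩, t₂, ht₂, hW₂⟩ := hleap
  have hmoving := hsol.leapfrogField_ne_zero hd hβ hrs
  have hne₁ : θ t₁ ≠ θs := fun heq => hmoving t₁ (by rw [heq, hW₁, h.leapfrogField_left])
  have hne₂ : θ t₂ ≠ θss := fun heq => hmoving t₂ (by rw [heq, hW₂, h.leapfrogField_right])
  have hEs : Ham α d β (θ 0) (W 0) < Ham α d β θs 0 := by
    rw [hsol.ham_eq hd hβ 0 t₁, hW₁]
    have hmono := h.ham_left_unimodal hα hd hβ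
    exact lt_of_strictMonoOn_of_strictAntiOn hmono.1 hmono.2 h.left_mem ht₁ hne₁
  have hEss : Ham α d β (θ 0) (W 0) < Ham α d β θss 0 := by
    rw [hsol.ham_eq hd hβ 0 t₂, hW₂]
    have hmono := h.ham_right_unimodal hα hd hβ
    exact lt_of_strictMonoOn_of_strictAntiOn hmono.1 hmono.2 h.right_mem ht₂ hne₂
  have hE := lt_min hEs hEss
  exact ⟨h.mem_Ioo_of_ham_lt hα hd hβ hsol hE (h.left_mem.2.trans ht₂.1)
    (ht₁.2.trans h.right_mem.1) 0, hE⟩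

end IsEquilibriumPair

end Leapfrogging

theorem leapfrog_iff_same_sign_general
    (α d β : ℝ) (hα : 0 < α) (hd : 0 < d) (hβ : 0 < β) :
    ∃ θs θss : ℝ,
      0 < θs ∧ θs < thetaB β ∧ thetaB β < θss ∧ θss < Real.pi / 2 ∧
      (F1 α d β θs 0 = 0 ∧ F2 α d β θs 0 = 0) ∧
      (F1 α d β θss 0 = 0 ∧ F2 α d β θss 0 = 0) ∧
      (∀ p ∈ OmegaB β, F1 α d β p.1 p.2 = 0 → F2 α d β p.1 p.2 = 0 →
        p = (θs, 0) ∨ p = (θss, 0)) ∧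
      ∀ θ₀ W₀ : ℝ, (θ₀, W₀) ∈ OmegaB β →
        ∀ θ W : ℝ → ℝ, IsSolution α d β θ W → θ 0 = θ₀ → W 0 = W₀ →
          (IsLeapfrog β θ W ↔
            θ₀ ∈ Set.Ioo θs θss ∧
              Ham α d β θ₀ W₀ < min (Ham α d β θs 0) (Ham α d β θss 0)) := by
  obtain ⟨θs, θss, h⟩ := exists_isEquilibriumPair (d := d) hα hd hβ
  refine ⟨θs, θss, h.left_mem.1, h.left_mem.2, h.right_mem.1, h.right_mem.2,
    ⟨F1_axis α d β θs, h.F2_left⟩, ⟨F1_axis α d β θss, h.F2_right⟩,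
    fun p hp hF1 hF2 => h.eq_or_eq_of_leapfrogField_eq_zero hα hd hβ hp (Prod.ext hF1 hF2), ?_⟩
  rintro _ _ - θ W hsol rfl rfl
  exact ⟨h.mem_Ioo_and_ham_lt_of_isLeapfrog hα hd hβ hsol,
    fun ⟨hθ₀, hE⟩ => h.isLeapfrog_of_ham_lt hα hd hβ hsol hθ₀ hE⟩

/-- Theorem 3.2: the system has exactly two equilibrium points (θ_*, 0) and
(θ_**, 0) with 0 < θ_* < θ_β < θ_** < π/2, and a solution with initial data
(θ₀, W₀) ∈ Ω_β is a leapfrogging solution iff θ₀ ∈ (θ_*, θ_**) and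
H(θ₀, W₀) < min{H(θ_*, 0), H(θ_**, 0)}. -/
theorem leapfrog_iff_same_sign
    (α d β : ℝ) (hα : 0 < α) (hα' : α < 1 / 3) (hd : 0 < d) (hβ : 1 ≤ β) :
    ∃ θs θss : ℝ,
      0 < θs ∧ θs < thetaB β ∧ thetaB β < θss ∧ θss < Real.pi / 2 ∧
      (F1 α d β θs 0 = 0 ∧ F2 α d β θs 0 = 0) ∧
      (F1 α d β θss 0 = 0 ∧ F2 α d β θss 0 = 0) ∧
      (∀ p ∈ OmegaB β, F1 α d β p.1 p.2 = 0 → F2 α d β p.1 p.2 = 0 →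
        p = (θs, 0) ∨ p = (θss, 0)) ∧
      ∀ θ₀ W₀ : ℝ, (θ₀, W₀) ∈ OmegaB β →
        ∀ θ W : ℝ → ℝ, IsSolution α d β θ W → θ 0 = θ₀ → W 0 = W₀ →
          (IsLeapfrog β θ W ↔
            θ₀ ∈ Set.Ioo θs θss ∧
              Ham α d β θ₀ W₀ < min (Ham α d β θs 0) (Ham α d β θss 0)) :=
  leapfrog_iff_same_sign_general α d β hα hd (by linarith)
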